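/- Let λ, ω ∈ ℝ and let μ : ℝ → ℝ be a twice differentiable function with μ(t) > 0 for all t, satisfying μ''(t) = 2λ/μ(t) + 1/μ(t)³ + ω² μ(t). Then the function a : ℝ → ℂ defined by a(t) = 1/μ(t)² − i μ'(t)/μ(t) satisfies the Riccati-type equation i a'(t) = a(t)² + 2λ Re(a(t)) + ω² for all t ∈ ℝ. -/

import Mathlib

/-!
Write `u = 1/μ²` and let `w = μ'/μ` be the logarithmic derivative, so that `a = u - i w`. Then
`u' = -2 u w` and `w' = μ''/μ - w²`, and completing the square gives `i a' = a² + (μ''/μ - u²)`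
for every nonvanishing `μ`. The differential equation says exactly that `μ''/μ - u²` is
`2 λ u + ω²`, and `u = Re a`.
-/

section LogDeriv

variable {𝕜 𝕜' : Type*} [NontriviallyNormedField 𝕜] [NontriviallyNormedField 𝕜']
  [NormedAlgebra 𝕜 𝕜'] {f : 𝕜 → 𝕜'} {x : 𝕜}

theorem hasDerivAt_one_div_sq (hf : DifferentiableAt 𝕜 f x) (hx : f x ≠ 0) :
    HasDerivAt (fun y => 1 / f y ^ 2) (-2 * (1 / f x ^ 2) * logDeriv f x) x := by
  have h := (hasDerivAt_const x (1 : 𝕜')).fun_div (hf.hasDerivAt.fun_pow 2) (pow_ne_zero 2 hx)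
  refine h.congr_deriv ?_
  rw [logDeriv_apply]
  field_simp
  push_cast
  ring

theorem hasDerivAt_logDeriv (hf : DifferentiableAt 𝕜 f x)
    (hf' : DifferentiableAt 𝕜 (deriv f) x) (hx : f x ≠ 0) :
    HasDerivAt (logDeriv f) (deriv (deriv f) x / f x - logDeriv f x ^ 2) x := by
  refine (hf'.hasDerivAt.div hf.hasDerivAt hx).congr_deriv ?_
  rw [logDeriv_apply]
  field_simp

end LogDeriv

section Riccati

open Complex

/-- The function `a = 1/μ² - i μ'/μ` attached to `μ`, which turns the second-order equation for `μ`
into a first-order equation of Riccati type. It is meaningful where `μ` is differentiable and does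
not vanish. -/
noncomputable def riccatiVariable (μ : ℝ → ℝ) (t : ℝ) : ℂ :=
  ((1 / μ t ^ 2 : ℝ) : ℂ) - I * ((logDeriv μ t : ℝ) : ℂ)

theorem riccatiVariable_re (μ : ℝ → ℝ) (t : ℝ) : (riccatiVariable μ t).re = 1 / μ t ^ 2 := by
  rw [riccatiVariable, sub_re, re_mul_ofReal, ofReal_re, I_re, zero_mul, sub_zero]

variable {μ : ℝ → ℝ} {t : ℝ}

theorem hasDerivAt_riccatiVariable (hμ : DifferentiableAt ℝ μ t)
    (hμ' : DifferentiableAt ℝ (deriv μ) t) (ht : μ t ≠ 0) :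
    HasDerivAt (riccatiVariable μ)
      (-I * (riccatiVariable μ t ^ 2 +
        ((deriv (deriv μ) t / μ t - (1 / μ t ^ 2) ^ 2 : ℝ) : ℂ))) t := by
  have hderiv := (hasDerivAt_one_div_sq hμ ht).ofReal_comp.fun_sub
    ((hasDerivAt_logDeriv hμ hμ' ht).ofReal_comp.const_mul I)
  refine hderiv.congr_deriv ?_
  rw [riccatiVariable]
  push_cast
  linear_combination
    (I * ((logDeriv μ t : ℝ) : ℂ) ^ 2 - 2 * (1 / (μ t : ℂ) ^ 2) * ((logDeriv μ t : ℝ) : ℂ)) * I_sq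

theorem stmt_2_general {lam κ : ℝ} (hμ : DifferentiableAt ℝ μ t)
    (hμ' : DifferentiableAt ℝ (deriv μ) t) (ht : μ t ≠ 0)
    (hODE : deriv (deriv μ) t = 2 * lam / μ t + 1 / μ t ^ 3 + κ * μ t) :
    I * deriv (riccatiVariable μ) t =
      riccatiVariable μ t ^ 2 + 2 * (lam : ℂ) * ((riccatiVariable μ t).re : ℂ) + (κ : ℂ) := by
  have hquot : deriv (deriv μ) t / μ t - (1 / μ t ^ 2) ^ 2 = 2 * lam * (1 / μ t ^ 2) + κ := by
    rw [hODE]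
    field_simp
    ring
  rw [(hasDerivAt_riccatiVariable hμ hμ' ht).deriv, ← mul_assoc, mul_neg, I_mul_I, neg_neg,
    one_mul, hquot, riccatiVariable_re]
  push_cast
  ring

end Riccati

/-- If `μ : ℝ → ℝ` is twice differentiable, positive, and satisfies
`μ'' = 2λ/μ + 1/μ³ + ω² μ`, then `a(t) = 1/μ(t)² − i μ'(t)/μ(t)` satisfies the
Riccati-type equation `i a' = a² + 2 λ Re a + ω²`. -/
theorem stmt_2 (lam om : ℝ) (μ : ℝ → ℝ)
    (hd1 : Differentiable ℝ μ) (hd2 : Differentiable ℝ (deriv μ))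
    (hpos : ∀ t : ℝ, 0 < μ t)
    (hODE : ∀ t : ℝ, deriv (deriv μ) t = 2 * lam / μ t + 1 / (μ t) ^ 3 + om ^ 2 * μ t) :
    ∀ t : ℝ,
      Complex.I * deriv (fun t : ℝ =>
          ((1 / (μ t) ^ 2 : ℝ) : ℂ) - Complex.I * ((deriv μ t / μ t : ℝ) : ℂ)) t
        = (((1 / (μ t) ^ 2 : ℝ) : ℂ) - Complex.I * ((deriv μ t / μ t : ℝ) : ℂ)) ^ 2
          + 2 * (lam : ℂ)
            * (((((1 / (μ t) ^ 2 : ℝ) : ℂ)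
                - Complex.I * ((deriv μ t / μ t : ℝ) : ℂ)).re : ℝ) : ℂ)
          + (om : ℂ) ^ 2 := by
  intro t
  exact_mod_cast stmt_2_general (hd1 t) (hd2 t) (hpos t).ne' (hODE t)
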